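/- Let d ≥ 2, and let Y be a d-dimensional Gaussian random vector with arbitrary mean and standard deviation σ ≤ 1. Then there is an absolute constant c > 0 such that for every interval I ⊆ ℝ of length ε, the probability that ‖Y‖² ∈ I is at most c · ε/(√d · σ²). -/

import Mathlib

open MeasureTheory ProbabilityTheory

/-- A `d`-dimensional Gaussian random vector with mean `μ` and standard deviation `σ`,
realized as the product of `d` independent one-dimensional Gaussians, viewed as a measure
on `EuclideanSpace ℝ (Fin d)`. -/
noncomputable def gaussianVec (d : ℕ) (μ : Fin d → ℝ) (σ : ℝ) : Measure (Fin d → ℝ) :=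
  Measure.pi fun j => gaussianReal (μ j) ((σ ^ 2).toNNReal)

/-- The identification of `Fin d → ℝ` with `EuclideanSpace ℝ (Fin d)`. -/
noncomputable def toEuc {d : ℕ} (x : Fin d → ℝ) : EuclideanSpace ℝ (Fin d) :=
  (WithLp.equiv 2 (Fin d → ℝ)).symm x

/-!
Adding an independent variable never increases the largest mass that a law gives to an interval of
length `ε`, and smoothing by a Gaussian bounds that mass by `ε / 2` times the `L¹` norm of the
characteristic function. For the square of a Gaussian of variance `v` the characteristic function
is at most `(1 + 4v²s²)^(-1/4)` in absolute value, whatever the mean; for `d ≥ 4` independent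
squares, Bernoulli's inequality turns the product of these bounds into `(1 + d v² s²)⁻¹`, whose
integral is `π / (√d v)`. For two squares the characteristic function may fail to be integrable,
so for `d ≤ 3` only two coordinates are kept: their joint density is at most `1 / (2πv)` and the
annulus on which the sum of their squares lies in an interval of length `ε` has area at most `πε`.
-/

open scoped ENNReal NNReal

section LevyConcentration

/-- Lévy's concentration function: the largest mass that `ν` gives to a closed interval of
length `ε`. It is `0` for `ε < 0`, where `Set.Icc t (t + ε)` is empty. -/
noncomputable def levyConcentration (ν : Measure ℝ) (ε : ℝ) : ℝ≥0∞ :=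
  ⨆ t, ν (Set.Icc t (t + ε))

variable {ν : Measure ℝ} {ε : ℝ}

lemma measure_Icc_le_levyConcentration (t : ℝ) :
    ν (Set.Icc t (t + ε)) ≤ levyConcentration ν ε :=
  le_iSup (fun t ↦ ν (Set.Icc t (t + ε))) t

lemma levyConcentration_mono (ν : Measure ℝ) : Monotone (levyConcentration ν) :=
  fun _ _ h ↦ iSup_mono fun _ ↦ measure_mono (Set.Icc_subset_Icc_right (by gcongr))

lemma levyConcentration_le_of_forall_gt {f : ℝ → ℝ≥0∞}
    (hf : ContinuousWithinAt f (Set.Ioi ε) ε) (h : ∀ δ > ε, levyConcentration ν δ ≤ f δ) :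
    levyConcentration ν ε ≤ f ε :=
  ge_of_tendsto hf <| Filter.eventually_of_mem self_mem_nhdsWithin fun δ hδ ↦
    (levyConcentration_mono ν (le_of_lt hδ)).trans (h δ hδ)

lemma levyConcentration_conv_le (ν ρ : Measure ℝ) [SFinite ν] [IsProbabilityMeasure ρ] (ε : ℝ) :
    levyConcentration (ν ∗ ρ) ε ≤ levyConcentration ν ε := by
  refine iSup_le fun t ↦ ?_
  have fiber_eq (y : ℝ) :
      (fun x ↦ (x, y)) ⁻¹' ((fun p : ℝ × ℝ ↦ p.1 + p.2) ⁻¹' Set.Icc t (t + ε))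
        = Set.Icc (t - y) (t - y + ε) := by
    ext x
    simp only [Set.mem_preimage, Set.mem_Icc]
    constructor <;> rintro ⟨hl, hr⟩ <;> constructor <;> linarith
  calc (ν ∗ ρ) (Set.Icc t (t + ε))
      = ∫⁻ y, ν (Set.Icc (t - y) (t - y + ε)) ∂ρ := by
        rw [Measure.conv, Measure.map_apply measurable_add measurableSet_Icc,
          Measure.prod_apply_symm (measurable_add measurableSet_Icc)]
        simp_rw [fiber_eq]
    _ ≤ ∫⁻ _, levyConcentration ν ε ∂ρ :=
        lintegral_mono fun y ↦ measure_Icc_le_levyConcentration (t - y)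
    _ = levyConcentration ν ε := by simp

lemma levyConcentration_map_sum_le_of_iIndepFun {Ω ι : Type*} [MeasurableSpace Ω]
    {P : Measure Ω} [Fintype ι] {X : ι → Ω → ℝ} (hX : ∀ i, AEMeasurable (X i) P)
    (hindep : iIndepFun X P) (s : Finset ι) (ε : ℝ) :
    levyConcentration (P.map fun ω ↦ ∑ i, X i ω) ε
      ≤ levyConcentration (P.map fun ω ↦ ∑ i ∈ s, X i ω) ε := by
  classical
  have := hindep.isProbabilityMeasure
  have hmeas (u : Finset ι) : AEMeasurable (fun ω ↦ ∑ i ∈ u, X i ω) P := by fun_prop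
  have := Measure.isProbabilityMeasure_map (hmeas sᶜ)
  have hsplit : (fun ω ↦ ∑ i, X i ω) = (fun ω ↦ ∑ i ∈ s, X i ω) + fun ω ↦ ∑ i ∈ sᶜ, X i ω := by
    ext ω
    simp [Finset.sum_add_sum_compl]
  have hindep_compl : IndepFun (fun ω ↦ ∑ i ∈ s, X i ω) (fun ω ↦ ∑ i ∈ sᶜ, X i ω) P := by
    have measurable_sum (u : Finset ι) : Measurable fun x : u → ℝ ↦ ∑ i, x i := by fun_prop
    simp_rw [← Finset.sum_coe_sort s, ← Finset.sum_coe_sort sᶜ]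
    exact (hindep.indepFun_finset₀ s sᶜ disjoint_compl_right hX).comp
      (measurable_sum s) (measurable_sum sᶜ)
  rw [hsplit, hindep_compl.map_add_eq_map_conv_map₀ (hmeas s) (hmeas sᶜ)]
  exact levyConcentration_conv_le _ _ ε

end LevyConcentration

section Fourier

lemma integral_charFun_comm {E : Type*} [NormedAddCommGroup E] [InnerProductSpace ℝ E]
    [MeasurableSpace E] [BorelSpace E] [SecondCountableTopology E] (μ ν : Measure E)
    [IsFiniteMeasure μ] [IsFiniteMeasure ν] :
    ∫ x, charFun μ x ∂ν = ∫ x, charFun ν x ∂μ := by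
  have hint : Integrable
      (Function.uncurry fun x y : E ↦ Complex.exp (inner ℝ y x * Complex.I)) (ν.prod μ) := by
    refine .of_bound (C := 1) (by unfold Function.uncurry; fun_prop) (ae_of_all _ fun p ↦ ?_)
    exact (Complex.norm_exp_ofReal_mul_I _).le
  simp_rw [charFun_apply]
  rw [integral_integral_swap hint]
  simp_rw [real_inner_comm]

lemma gaussianPDFReal_le (m : ℝ) (v : ℝ≥0) (x : ℝ) :
    gaussianPDFReal m v x ≤ (√(2 * Real.pi * v))⁻¹ := by
  refine mul_le_of_le_one_right (by positivity) (Real.exp_le_one_iff.2 ?_)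
  exact div_nonpos_of_nonpos_of_nonneg (neg_nonpos.2 (sq_nonneg _)) (by positivity)

variable {ν : Measure ℝ}

lemma integral_exp_neg_mul_sq_le_integral_norm_charFun [IsFiniteMeasure ν]
    (hν : Integrable (charFun ν)) {w : ℝ≥0} (hw : w ≠ 0) :
    ∫ x, Real.exp (-(w * x ^ 2 / 2)) ∂ν ≤ (√(2 * Real.pi * w))⁻¹ * ∫ s, ‖charFun ν s‖ := by
  have exp_eq_charFun (x : ℝ) :
      (Real.exp (-(w * x ^ 2 / 2)) : ℂ) = charFun (gaussianReal 0 w) x := by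
    rw [charFun_gaussianReal]
    push_cast
    congr 1
    ring
  calc ∫ x, Real.exp (-(w * x ^ 2 / 2)) ∂ν
      ≤ ‖∫ s, charFun ν s ∂(gaussianReal 0 w)‖ := by
        rw [integral_charFun_comm, ← integral_congr_ae (ae_of_all _ exp_eq_charFun),
          integral_complex_ofReal, Complex.norm_real]
        exact le_abs_self _
    _ = ‖∫ s, gaussianPDFReal 0 w s • charFun ν s‖ := by
        rw [integral_gaussianReal_eq_integral_smul hw]
    _ ≤ ∫ s, (√(2 * Real.pi * w))⁻¹ * ‖charFun ν s‖ := by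
        refine norm_integral_le_of_norm_le (hν.norm.const_mul _) (ae_of_all _ fun s ↦ ?_)
        rw [norm_smul, Real.norm_of_nonneg (gaussianPDFReal_nonneg _ _ _)]
        gcongr
        exact gaussianPDFReal_le 0 w s
    _ = (√(2 * Real.pi * w))⁻¹ * ∫ s, ‖charFun ν s‖ := integral_const_mul _ _

lemma measureReal_Icc_neg_self_le_integral_exp [IsFiniteMeasure ν] {r : ℝ} (hr : 0 < r) :
    2⁻¹ * ν.real (Set.Icc (-r) r) ≤ ∫ x, Real.exp (-((r ^ 2)⁻¹ * x ^ 2 / 2)) ∂ν := by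
  have exp_le_one (x : ℝ) : Real.exp (-((r ^ 2)⁻¹ * x ^ 2 / 2)) ≤ 1 :=
    Real.exp_le_one_iff.2 (neg_nonpos.2 (by positivity))
  have half_le_exp {x : ℝ} (hx : x ∈ Set.Icc (-r) r) :
      2⁻¹ ≤ Real.exp (-((r ^ 2)⁻¹ * x ^ 2 / 2)) := by
    have hx' : (r ^ 2)⁻¹ * x ^ 2 ≤ 1 :=
      inv_mul_le_one_of_le₀ (sq_le_sq' hx.1 hx.2) (by positivity)
    linarith [Real.add_one_le_exp (-((r ^ 2)⁻¹ * x ^ 2 / 2))]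
  rw [mul_comm, ← smul_eq_mul, ← integral_indicator_const _ measurableSet_Icc]
  refine integral_mono ((integrable_const _).indicator measurableSet_Icc)
    (.of_bound (C := 1) (by fun_prop) (ae_of_all _ fun x ↦ ?_)) fun x ↦ ?_
  · simpa only [Real.norm_eq_abs, Real.abs_exp] using exp_le_one x
  · exact Set.indicator_le' (fun _ ↦ half_le_exp) (fun _ _ ↦ (Real.exp_pos _).le) x

lemma measureReal_Icc_neg_self_le_integral_norm_charFun [IsFiniteMeasure ν]
    (hν : Integrable (charFun ν)) {r : ℝ} (hr : 0 < r) :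
    ν.real (Set.Icc (-r) r) ≤ r * ∫ s, ‖charFun ν s‖ := by
  have hw : (((r ^ 2)⁻¹).toNNReal : ℝ) = (r ^ 2)⁻¹ := Real.coe_toNNReal _ (by positivity)
  have hsqrt : (√(2 * Real.pi * (r ^ 2)⁻¹))⁻¹ ≤ 2⁻¹ * r := by
    rw [inv_le_comm₀ (by positivity) (by positivity)]
    refine Real.le_sqrt_of_sq_le ?_
    rw [mul_inv, inv_inv, mul_pow, inv_pow]
    gcongr
    linarith [Real.pi_gt_three]
  have hsmooth := integral_exp_neg_mul_sq_le_integral_norm_charFun hν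
    (w := ((r ^ 2)⁻¹).toNNReal) (by positivity)
  rw [hw] at hsmooth
  have : 2⁻¹ * ν.real (Set.Icc (-r) r) ≤ 2⁻¹ * r * ∫ s, ‖charFun ν s‖ :=
    (measureReal_Icc_neg_self_le_integral_exp hr).trans (hsmooth.trans (by gcongr))
  linarith

lemma norm_charFun_map_add_const (ν : Measure ℝ) (a s : ℝ) :
    ‖charFun (ν.map (· + a)) s‖ = ‖charFun ν s‖ := by
  rw [charFun_map_add_const, norm_mul, Complex.norm_exp_ofReal_mul_I, mul_one]

lemma levyConcentration_le_integral_norm_charFun [IsFiniteMeasure ν]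
    (hν : Integrable (charFun ν)) {ε : ℝ} (hε : 0 ≤ ε) :
    levyConcentration ν ε ≤ ENNReal.ofReal (ε / 2 * ∫ s, ‖charFun ν s‖) := by
  refine levyConcentration_le_of_forall_gt (f := fun δ ↦ .ofReal (δ / 2 * ∫ s, ‖charFun ν s‖))
    (ENNReal.continuous_ofReal.comp (by fun_prop)).continuousWithinAt fun δ hδ ↦ iSup_le fun t ↦ ?_
  have hcharFun := norm_charFun_map_add_const ν (-(t + δ / 2))
  have hshift : ν (Set.Icc t (t + δ))
      = ν.map (· + -(t + δ / 2)) (Set.Icc (-(δ / 2)) (δ / 2)) := by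
    rw [Measure.map_apply (by fun_prop) measurableSet_Icc]
    congr 1
    ext x
    simp only [Set.mem_preimage, Set.mem_Icc]
    constructor <;> rintro ⟨hl, hr⟩ <;> constructor <;> linarith
  rw [hshift, ← ofReal_measureReal, ← integral_congr_ae (ae_of_all _ hcharFun)]
  gcongr
  refine measureReal_Icc_neg_self_le_integral_norm_charFun ?_ (half_pos (hε.trans_lt hδ))
  exact hν.congr' measurable_charFun.aestronglyMeasurable (ae_of_all _ fun s ↦ (hcharFun s).symm)

end Fourier

section GaussianSquare

lemma ofReal_mul_cpow {r : ℝ} (hr : 0 ≤ r) (z c : ℂ) :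
    ((r : ℂ) * z) ^ c = (r : ℂ) ^ c * z ^ c := by
  rcases hr.eq_or_lt with rfl | hr
  · by_cases hc : c = 0 <;> simp [hc]
  rcases eq_or_ne z 0 with rfl | hz
  · by_cases hc : c = 0 <;> simp [hc]
  have hr_ne : (r : ℂ) ≠ 0 := Complex.ofReal_ne_zero.2 hr.ne'
  rw [Complex.cpow_def_of_ne_zero (mul_ne_zero hr_ne hz), Complex.log_ofReal_mul hr hz,
    Complex.ofReal_log hr.le, add_mul, Complex.exp_add, ← Complex.cpow_def_of_ne_zero hr_ne,
    ← Complex.cpow_def_of_ne_zero hz]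

lemma gaussianPDFReal_smul_cexp_sq (m : ℝ) {v : ℝ≥0} (hv : v ≠ 0) (s x : ℝ) :
    gaussianPDFReal m v x • Complex.exp (s * ((x ^ 2 : ℝ) : ℂ) * Complex.I)
      = ((√(2 * Real.pi * v))⁻¹ : ℝ)
        * Complex.exp (-(1 - 2 * v * s * Complex.I) / (2 * v) * x ^ 2 + m / v * x
          + -(m ^ 2 / (2 * v))) := by
  have hv_ne : (v : ℂ) ≠ 0 := by exact_mod_cast hv
  rw [gaussianPDFReal, Complex.real_smul, Complex.ofReal_mul, mul_assoc, Complex.ofReal_exp,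
    ← Complex.exp_add]
  congr 2
  push_cast
  field_simp
  ring

lemma charFun_map_sq_gaussianReal (m : ℝ) (v : ℝ≥0) (s : ℝ) :
    charFun ((gaussianReal m v).map (· ^ 2)) s
      = (1 - 2 * v * s * Complex.I)⁻¹ ^ (1 / 2 : ℂ)
        * Complex.exp (m ^ 2 * s * Complex.I / (1 - 2 * v * s * Complex.I)) := by
  rcases eq_or_ne v 0 with rfl | hv
  · simp [Measure.map_dirac, mul_comm]
  set z : ℂ := 1 - 2 * v * s * Complex.I with hz
  have hz_re : z.re = 1 := by simp [hz]
  have hz_ne : z ≠ 0 := fun h ↦ by simp [h] at hz_re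
  have hv_ne : (v : ℂ) ≠ 0 := by exact_mod_cast hv
  have hb : (-z / (2 * v)).re < 0 := by
    have : -z / (2 * v) = -z / ((2 * v : ℝ) : ℂ) := by push_cast; rfl
    rw [this, Complex.div_ofReal_re, Complex.neg_re, hz_re]
    exact div_neg_of_neg_of_pos (by norm_num) (by positivity)
  have hcpow : (Real.pi / -(-z / (2 * v))) ^ (1 / 2 : ℂ)
      = √(2 * Real.pi * v) * z⁻¹ ^ (1 / 2 : ℂ) := by
    have hfactor : Real.pi / -(-z / (2 * v)) = ((2 * Real.pi * v : ℝ) : ℂ) * z⁻¹ := by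
      push_cast
      field_simp
    rw [hfactor, ofReal_mul_cpow (by positivity), Real.sqrt_eq_rpow,
      Complex.ofReal_cpow (by positivity)]
    norm_num
  rw [charFun_apply_real, integral_map (by fun_prop) (by fun_prop),
    integral_gaussianReal_eq_integral_smul hv]
  calc ∫ x : ℝ, gaussianPDFReal m v x • Complex.exp (s * ((x ^ 2 : ℝ) : ℂ) * Complex.I)
      = ∫ x : ℝ, ((√(2 * Real.pi * v))⁻¹ : ℝ)
          * Complex.exp (-z / (2 * v) * x ^ 2 + m / v * x + -(m ^ 2 / (2 * v))) := by
        simp_rw [gaussianPDFReal_smul_cexp_sq m hv, hz]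
    _ = z⁻¹ ^ (1 / 2 : ℂ)
          * Complex.exp (-(m ^ 2 / (2 * v)) - (m / v) ^ 2 / (4 * (-z / (2 * v)))) := by
        have hsqrt : (√(2 * Real.pi * v) : ℂ) ≠ 0 := by
          exact_mod_cast (Real.sqrt_pos.2 (by positivity)).ne'
        rw [integral_const_mul, integral_cexp_quadratic hb, hcpow, Complex.ofReal_inv, ← mul_assoc,
          inv_mul_cancel_left₀ hsqrt]
    _ = z⁻¹ ^ (1 / 2 : ℂ) * Complex.exp (m ^ 2 * s * Complex.I / z) := by
        congr 2
        field_simp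
        rw [hz]
        ring

lemma norm_charFun_map_sq_gaussianReal_le (m : ℝ) (v : ℝ≥0) (s : ℝ) :
    ‖charFun ((gaussianReal m v).map (· ^ 2)) s‖
      ≤ (1 + 4 * v ^ 2 * s ^ 2 : ℝ) ^ (-(1 / 4) : ℝ) := by
  set z : ℂ := 1 - 2 * v * s * Complex.I with hz
  have hz_re : z.re = 1 := by simp [hz]
  have hz_im : z.im = -(2 * v * s) := by simp [hz]
  have hz_normSq : Complex.normSq z = 1 + 4 * v ^ 2 * s ^ 2 := by
    rw [Complex.normSq_apply, hz_re, hz_im]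
    ring
  have hz_norm : ‖z‖ = (1 + 4 * v ^ 2 * s ^ 2 : ℝ) ^ (1 / 2 : ℝ) := by
    rw [Complex.norm_def, hz_normSq, Real.sqrt_eq_rpow]
  have hexp_re : (m ^ 2 * s * Complex.I / z).re ≤ 0 := by
    have : (m ^ 2 * s * Complex.I / z).re = -(2 * m ^ 2 * v * s ^ 2 / (1 + 4 * v ^ 2 * s ^ 2)) := by
      have hcast : (m ^ 2 * s * Complex.I : ℂ) = (m ^ 2 * s : ℝ) * Complex.I := by push_cast; rfl
      rw [Complex.div_re, hz_normSq, hz_re, hz_im, hcast, Complex.re_ofReal_mul,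
        Complex.im_ofReal_mul, Complex.I_re, Complex.I_im]
      ring
    rw [this, neg_nonpos]
    positivity
  rw [charFun_map_sq_gaussianReal, ← hz, norm_mul, Complex.norm_exp]
  calc ‖z⁻¹ ^ (1 / 2 : ℂ)‖ * Real.exp (m ^ 2 * s * Complex.I / z).re
      ≤ ‖z⁻¹ ^ (1 / 2 : ℂ)‖ :=
        mul_le_of_le_one_right (norm_nonneg _) (Real.exp_le_one_iff.2 hexp_re)
    _ = ‖z‖⁻¹ ^ (1 / 2 : ℝ) := by
        rw [← norm_inv, ← Complex.norm_cpow_real]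
        norm_num
    _ = (1 + 4 * v ^ 2 * s ^ 2 : ℝ) ^ (-(1 / 4) : ℝ) := by
        rw [hz_norm, ← Real.rpow_neg (by positivity), ← Real.rpow_mul (by positivity)]
        norm_num

lemma gaussianReal_le_smul_volume (m : ℝ) {v : ℝ≥0} (hv : v ≠ 0) :
    gaussianReal m v ≤ ENNReal.ofReal (√(2 * Real.pi * v))⁻¹ • volume := by
  rw [gaussianReal_of_var_ne_zero m hv, ← withDensity_const]
  exact withDensity_mono (ae_of_all _ fun x ↦ ENNReal.ofReal_le_ofReal (gaussianPDFReal_le m v x))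

lemma volume_setOf_sq_add_sq_mem_Icc_le (t : ℝ) {ε : ℝ} (hε : 0 ≤ ε) :
    volume {p : ℝ × ℝ | p.1 ^ 2 + p.2 ^ 2 ∈ Set.Icc t (t + ε)}
      ≤ ENNReal.ofReal ε * NNReal.pi := by
  have ofReal_sqrt_sq (x : ℝ) : ENNReal.ofReal (√x) ^ 2 = ENNReal.ofReal x := by
    rw [← ENNReal.ofReal_pow (Real.sqrt_nonneg _), Real.sq_sqrt']
    simp
  have hannulus :
      Complex.measurableEquivRealProd ⁻¹' {p : ℝ × ℝ | p.1 ^ 2 + p.2 ^ 2 ∈ Set.Icc t (t + ε)}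
        ⊆ Metric.closedBall 0 (√(t + ε)) \ Metric.ball 0 (√t) := by
    rintro z ⟨hlower, hupper⟩
    have hz : z.re ^ 2 + z.im ^ 2 = ‖z‖ ^ 2 := by
      rw [Complex.sq_norm, Complex.normSq_apply]
      ring
    simp only [Complex.measurableEquivRealProd_apply, hz] at hlower hupper
    simp only [Set.mem_sdiff, mem_closedBall_zero_iff, mem_ball_zero_iff, not_lt]
    exact ⟨Real.le_sqrt_of_sq_le hupper, Real.sqrt_le_iff.2 ⟨norm_nonneg z, hlower⟩⟩
  have hmeas : MeasurableSet {p : ℝ × ℝ | p.1 ^ 2 + p.2 ^ 2 ∈ Set.Icc t (t + ε)} :=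
    measurableSet_Icc.preimage (by fun_prop)
  calc volume {p : ℝ × ℝ | p.1 ^ 2 + p.2 ^ 2 ∈ Set.Icc t (t + ε)}
      ≤ volume (Metric.closedBall (0 : ℂ) (√(t + ε)) \ Metric.ball 0 (√t)) := by
        rw [← Complex.volume_preserving_equiv_real_prod.measure_preimage hmeas.nullMeasurableSet]
        exact measure_mono hannulus
    _ = (ENNReal.ofReal (t + ε) - ENNReal.ofReal t) * NNReal.pi := by
        have hsubset : Metric.ball (0 : ℂ) (√t) ⊆ Metric.closedBall 0 (√(t + ε)) :=
          Metric.ball_subset_closedBall.trans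
            (Metric.closedBall_subset_closedBall (Real.sqrt_le_sqrt (by linarith)))
        rw [measure_sdiff hsubset measurableSet_ball.nullMeasurableSet measure_ball_lt_top.ne,
          Complex.volume_closedBall, Complex.volume_ball, ofReal_sqrt_sq, ofReal_sqrt_sq,
          ENNReal.sub_mul (by simp)]
    _ ≤ ENNReal.ofReal ε * NNReal.pi := by
        gcongr
        rw [tsub_le_iff_left]
        exact ENNReal.ofReal_add_le

lemma levyConcentration_map_sq_add_sq_prod_le {α β : Measure ℝ} {a b : ℝ≥0∞}
    (hα : α ≤ a • volume) (hβ : β ≤ b • volume) {ε : ℝ} (hε : 0 ≤ ε) :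
    levyConcentration ((α.prod β).map fun p ↦ p.1 ^ 2 + p.2 ^ 2) ε
      ≤ a * (b * (ENNReal.ofReal ε * NNReal.pi)) := by
  refine iSup_le fun t ↦ ?_
  rw [Measure.map_apply (by fun_prop) measurableSet_Icc]
  calc α.prod β {p | p.1 ^ 2 + p.2 ^ 2 ∈ Set.Icc t (t + ε)}
      ≤ (a • volume : Measure ℝ).prod (b • volume : Measure ℝ)
          {p | p.1 ^ 2 + p.2 ^ 2 ∈ Set.Icc t (t + ε)} :=
        Measure.prod_mono hα hβ _
    _ = a * (b * volume {p : ℝ × ℝ | p.1 ^ 2 + p.2 ^ 2 ∈ Set.Icc t (t + ε)}) := by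
        rw [Measure.prod_smul_left, Measure.prod_smul_right, ← Measure.volume_eq_prod]
        simp only [Measure.smul_apply, smul_eq_mul]
    _ ≤ a * (b * (ENNReal.ofReal ε * NNReal.pi)) := by
        gcongr
        exact volume_setOf_sq_add_sq_mem_Icc_le t hε

end GaussianSquare

section SumOfSquares

variable {Ω ι : Type*} [MeasurableSpace Ω] {P : Measure Ω} [Fintype ι] {X : ι → Ω → ℝ}
  {m : ι → ℝ} {w : ι → ℝ≥0} {v : ℝ}

lemma norm_charFun_map_sum_sq_le (hX : ∀ i, HasLaw (X i) (gaussianReal (m i) (w i)) P)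
    (hindep : iIndepFun X P) (s : ℝ) :
    ‖charFun (P.map fun ω ↦ ∑ i, X i ω ^ 2) s‖
      ≤ ∏ i, (1 + 4 * w i ^ 2 * s ^ 2 : ℝ) ^ (-(1 / 4) : ℝ) := by
  have hsq_law (i : ι) : P.map (fun ω ↦ X i ω ^ 2) = (gaussianReal (m i) (w i)).map (· ^ 2) := by
    rw [← (hX i).map_eq, AEMeasurable.map_map_of_aemeasurable (by fun_prop) (hX i).aemeasurable]
    rfl
  have hsq_indep : iIndepFun (fun i ω ↦ X i ω ^ 2) P :=
    hindep.comp (fun _ x ↦ x ^ 2) fun _ ↦ by fun_prop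
  rw [hsq_indep.charFun_map_fun_sum_eq_prod fun i ↦ (hX i).aemeasurable.pow_const 2,
    Finset.prod_apply, norm_prod]
  gcongr with i
  rw [hsq_law]
  exact norm_charFun_map_sq_gaussianReal_le (m i) (w i) s

lemma norm_charFun_map_sum_sq_le_inv_one_add_sq
    (hX : ∀ i, HasLaw (X i) (gaussianReal (m i) (w i)) P) (hindep : iIndepFun X P)
    (hv : 0 ≤ v) (hw : ∀ i, v ≤ w i) (hι : 4 ≤ Fintype.card ι) (s : ℝ) :
    ‖charFun (P.map fun ω ↦ ∑ i, X i ω ^ 2) s‖ ≤ (1 + (√(Fintype.card ι) * v * s) ^ 2)⁻¹ := by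
  have hι' : (4 : ℝ) ≤ Fintype.card ι := by exact_mod_cast hι
  have bernoulli : 1 + (√(Fintype.card ι) * v * s) ^ 2
      ≤ (1 + 4 * v ^ 2 * s ^ 2) ^ ((Fintype.card ι : ℝ) / 4) :=
    calc 1 + (√(Fintype.card ι) * v * s) ^ 2
        = 1 + (Fintype.card ι : ℝ) / 4 * (4 * v ^ 2 * s ^ 2) := by
          rw [mul_pow, mul_pow, Real.sq_sqrt (Nat.cast_nonneg _)]
          ring
      _ ≤ _ := one_add_mul_self_le_rpow_one_add
          (neg_one_lt_zero.le.trans (by positivity)) (by linarith)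
  calc ‖charFun (P.map fun ω ↦ ∑ i, X i ω ^ 2) s‖
      ≤ ∏ i, (1 + 4 * w i ^ 2 * s ^ 2 : ℝ) ^ (-(1 / 4) : ℝ) :=
        norm_charFun_map_sum_sq_le hX hindep s
    _ ≤ ∏ _i : ι, (1 + 4 * v ^ 2 * s ^ 2) ^ (-(1 / 4) : ℝ) := by
        refine Finset.prod_le_prod (fun _ _ ↦ by positivity) fun i _ ↦ ?_
        refine Real.rpow_le_rpow_of_nonpos (by positivity) ?_ (by norm_num)
        gcongr
        exact hw i
    _ = ((1 + 4 * v ^ 2 * s ^ 2) ^ ((Fintype.card ι : ℝ) / 4))⁻¹ := by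
        rw [Finset.prod_const, Finset.card_univ, ← Real.rpow_mul_natCast (by positivity),
          ← Real.rpow_neg (by positivity)]
        ring_nf
    _ ≤ (1 + (√(Fintype.card ι) * v * s) ^ 2)⁻¹ := inv_anti₀ (by positivity) bernoulli

lemma integral_inv_one_add_mul_sq {a : ℝ} (ha : 0 < a) :
    ∫ s : ℝ, (1 + (a * s) ^ 2)⁻¹ = Real.pi / a := by
  rw [Measure.integral_comp_mul_left (fun x : ℝ ↦ (1 + x ^ 2)⁻¹), integral_univ_inv_one_add_sq,
    abs_of_pos (inv_pos.2 ha), smul_eq_mul, inv_mul_eq_div]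

lemma levyConcentration_map_sum_sq_le_of_four_le_card
    (hX : ∀ i, HasLaw (X i) (gaussianReal (m i) (w i)) P) (hindep : iIndepFun X P)
    (hv : 0 < v) (hw : ∀ i, v ≤ w i) (hι : 4 ≤ Fintype.card ι) {ε : ℝ} (hε : 0 ≤ ε) :
    levyConcentration (P.map fun ω ↦ ∑ i, X i ω ^ 2) ε
      ≤ ENNReal.ofReal (ε / 2 * (Real.pi / (√(Fintype.card ι) * v))) := by
  have := hindep.isProbabilityMeasure
  have ha : 0 < √(Fintype.card ι : ℝ) * v := by positivity
  have hbound := norm_charFun_map_sum_sq_le_inv_one_add_sq hX hindep hv.le hw hι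
  have hbound_int : Integrable fun s : ℝ ↦ (1 + (√(Fintype.card ι) * v * s) ^ 2)⁻¹ :=
    integrable_inv_one_add_sq.comp_mul_left' ha.ne'
  have hcharFun_int : Integrable (charFun (P.map fun ω ↦ ∑ i, X i ω ^ 2)) :=
    hbound_int.mono' measurable_charFun.aestronglyMeasurable (ae_of_all _ hbound)
  refine (levyConcentration_le_integral_norm_charFun hcharFun_int hε).trans ?_
  rw [← integral_inv_one_add_mul_sq ha]
  gcongr ENNReal.ofReal (ε / 2 * ?_)
  exact integral_mono hcharFun_int.norm hbound_int hbound

lemma levyConcentration_map_sq_add_sq_le {X Y : Ω → ℝ} {mX mY : ℝ} {wX wY : ℝ≥0}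
    (hX : HasLaw X (gaussianReal mX wX) P) (hY : HasLaw Y (gaussianReal mY wY) P)
    (hindep : IndepFun X Y P) (hv : 0 < v) (hwX : v ≤ wX) (hwY : v ≤ wY)
    {ε : ℝ} (hε : 0 ≤ ε) :
    levyConcentration (P.map fun ω ↦ X ω ^ 2 + Y ω ^ 2) ε ≤ ENNReal.ofReal (ε / (2 * v)) := by
  have := hX.isProbabilityMeasure
  have hgaussian_le (m : ℝ) {u : ℝ≥0} (hu : v ≤ u) :
      gaussianReal m u ≤ ENNReal.ofReal (√(2 * Real.pi * v))⁻¹ • volume := by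
    have hu_pos : (0 : ℝ) < u := hv.trans_le hu
    refine (gaussianReal_le_smul_volume m (NNReal.coe_pos.1 hu_pos).ne').trans ?_
    gcongr
  have hlaw : P.map (fun ω ↦ X ω ^ 2 + Y ω ^ 2)
      = ((gaussianReal mX wX).prod (gaussianReal mY wY)).map fun p ↦ p.1 ^ 2 + p.2 ^ 2 := by
    rw [← (hindep.hasLaw_prod hX hY).map_eq, AEMeasurable.map_map_of_aemeasurable (by fun_prop)
      (hindep.hasLaw_prod hX hY).aemeasurable]
    rfl
  rw [hlaw]
  refine (levyConcentration_map_sq_add_sq_prod_le (hgaussian_le mX hwX) (hgaussian_le mY hwY)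
    hε).trans_eq ?_
  rw [← ENNReal.ofReal_coe_nnreal, NNReal.coe_real_pi, ← ENNReal.ofReal_mul hε,
    ← ENNReal.ofReal_mul (by positivity), ← ENNReal.ofReal_mul (by positivity), ← mul_assoc,
    ← mul_inv, Real.mul_self_sqrt (by positivity)]
  congr 1
  field_simp

lemma levyConcentration_map_sum_sq_le_of_nontrivial [Nontrivial ι]
    (hX : ∀ i, HasLaw (X i) (gaussianReal (m i) (w i)) P) (hindep : iIndepFun X P)
    (hv : 0 < v) (hw : ∀ i, v ≤ w i) {ε : ℝ} (hε : 0 ≤ ε) :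
    levyConcentration (P.map fun ω ↦ ∑ i, X i ω ^ 2) ε ≤ ENNReal.ofReal (ε / (2 * v)) := by
  classical
  obtain ⟨i, j, hij⟩ := exists_pair_ne ι
  have hsq_indep : iIndepFun (fun i ω ↦ X i ω ^ 2) P :=
    hindep.comp (fun _ x ↦ x ^ 2) fun _ ↦ by fun_prop
  refine (levyConcentration_map_sum_le_of_iIndepFun
    (fun i ↦ (hX i).aemeasurable.pow_const 2) hsq_indep {i, j} ε).trans ?_
  simp_rw [Finset.sum_pair hij]
  exact levyConcentration_map_sq_add_sq_le (hX i) (hX j) (hindep.indepFun hij) hv (hw i) (hw j) hε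

theorem norm_sq_gaussian_interval_general
    (hX : ∀ i, HasLaw (X i) (gaussianReal (m i) (w i)) P) (hindep : iIndepFun X P)
    (hv : 0 < v) (hw : ∀ i, v ≤ w i) (hι : 2 ≤ Fintype.card ι) {ε : ℝ} (hε : 0 ≤ ε) (t : ℝ) :
    P {ω | ∑ i, X i ω ^ 2 ∈ Set.Icc t (t + ε)}
      ≤ ENNReal.ofReal (2 * ε / (√(Fintype.card ι) * v)) := by
  have hmeas : AEMeasurable (fun ω ↦ ∑ i, X i ω ^ 2) P := by
    have (i : ι) := (hX i).aemeasurable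
    fun_prop
  calc P {ω | ∑ i, X i ω ^ 2 ∈ Set.Icc t (t + ε)}
      = P.map (fun ω ↦ ∑ i, X i ω ^ 2) (Set.Icc t (t + ε)) :=
        (Measure.map_apply_of_aemeasurable hmeas measurableSet_Icc).symm
    _ ≤ levyConcentration (P.map fun ω ↦ ∑ i, X i ω ^ 2) ε := measure_Icc_le_levyConcentration t
    _ ≤ ENNReal.ofReal (2 * ε / (√(Fintype.card ι) * v)) := ?_
  rcases le_or_gt 4 (Fintype.card ι) with hlarge | hsmall
  · refine (levyConcentration_map_sum_sq_le_of_four_le_card hX hindep hv hw hlarge hε).trans ?_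
    have hπ : ε / 2 * (Real.pi / (√(Fintype.card ι) * v))
        = Real.pi / 2 * ε / (√(Fintype.card ι) * v) := by ring
    rw [hπ]
    gcongr
    linarith [Real.pi_le_four]
  · have : Nontrivial ι := Fintype.one_lt_card_iff_nontrivial.1 hι
    have hsqrt : √(Fintype.card ι : ℝ) ≤ 2 :=
      Real.sqrt_le_iff.2 ⟨by norm_num, by norm_num; exact_mod_cast hsmall.le⟩
    refine (levyConcentration_map_sum_sq_le_of_nontrivial hX hindep hv hw hε).trans ?_
    gcongr
    linarith

end SumOfSquares

lemma norm_toEuc_sq {d : ℕ} (y : Fin d → ℝ) : ‖toEuc y‖ ^ 2 = ∑ i, y i ^ 2 := by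
  simp [toEuc, EuclideanSpace.norm_sq_eq]

lemma hasLaw_eval_gaussianVec (d : ℕ) (μ : Fin d → ℝ) (σ : ℝ) (i : Fin d) :
    HasLaw (fun y ↦ y i) (gaussianReal (μ i) (σ ^ 2).toNNReal) (gaussianVec d μ σ) :=
  (measurePreserving_eval (fun j ↦ gaussianReal (μ j) (σ ^ 2).toNNReal) i).hasLaw

lemma iIndepFun_eval_gaussianVec (d : ℕ) (μ : Fin d → ℝ) (σ : ℝ) :
    iIndepFun (fun i (y : Fin d → ℝ) ↦ y i) (gaussianVec d μ σ) :=
  iIndepFun_pi fun _ ↦ aemeasurable_id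

/-- Let `d ≥ 2` and let `Y` be a `d`-dimensional Gaussian random vector with
arbitrary mean and standard deviation `σ ≤ 1`. There is an absolute constant `c > 0` such that
for every interval `I` of length `ε`, `ℙ(‖Y‖² ∈ I) ≤ c·ε/(√d·σ²)`. -/
theorem norm_sq_gaussian_interval :
    ∃ c : ℝ, 0 < c ∧
      ∀ (d : ℕ), 2 ≤ d →
        ∀ (μ : Fin d → ℝ) (σ : ℝ), 0 < σ → σ ≤ 1 →
          ∀ ε : ℝ, 0 ≤ ε →
            ∀ t : ℝ,
              gaussianVec d μ σ {y : Fin d → ℝ | ‖toEuc y‖ ^ 2 ∈ Set.Icc t (t + ε)}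
                ≤ ENNReal.ofReal (c * ε / (Real.sqrt d * σ ^ 2)) := by
  refine ⟨2, two_pos, fun d hd μ σ hσ _ ε hε t ↦ ?_⟩
  simpa only [norm_toEuc_sq, Fintype.card_fin] using
    norm_sq_gaussian_interval_general (hasLaw_eval_gaussianVec d μ σ)
      (iIndepFun_eval_gaussianVec d μ σ) (sq_pos_of_pos hσ) (fun _ ↦ Real.le_coe_toNNReal _)
      (by simpa using hd) hε t
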